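/- There exists a finite solvable group of derived length exactly 8 whose composition length equals 15. -/

import Mathlib

/-!
The group is `2^{1+6} ⋊ ΓU₃(2)`, of order `128 · 1296 = 2^11 · 3^4`. Here `2^{1+6}` is the group `E`
of pairs `(v, a)` with `v ∈ F4³`, `a ∈ F4` and `a + ā = ⟨v, v⟩`, multiplied by
`(v, a)(w, b) = (v + w, a + b + ⟨v, w⟩)`; the unitary group `GU₃(2)` acts on `v`, and the Frobenius
automorphism of `F4` acts on everything. In this model `ΓU₃(2)`, which is `GL₂(3) ⋉ 3^{1+2}`, acts on
`2^{1+6}` through visible formulas, so the extensions split by construction.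

Upper bound for the derived length: the successive quotients of
`G ▷ E ⋊ GU₃(2) ▷ E ⋊ SU₃(2) ▷ E ⋊ 3^{1+2} ▷ E ▷ 1` have derived lengths at most `1, 1, 2, 2, 2`.
The subgroup `3^{1+2}` consists of the 27 Weyl matrices; it is normal because these are
exactly the matrices of `SU₃(2)` that are scalar or of trace zero (`exists_weyl_of_mem`). The
quotient of `SU₃(2)` by it has order `216 / 27 = 2³`, and groups of order `p³` have derived length
at most two (`derivedSeries_two_eq_bot_of_card`). An element of `SU₃(2)` is determined by its first
two rows, an arbitrary orthonormal pair, and there are 216 such pairs.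

Lower bound: explicit commutators. The chirp `diag(1, w, w)` lies in `G'` as Frobenius inverts it;
the Fourier matrix (in a quaternion group permuted by the chirp) lies in `G''`; its square, the
central involution, in `G⁽³⁾`; the shift and clock matrices, which that involution inverts, in
`G⁽⁴⁾`; their commutator, the scalar `w` up to inversion, in `G⁽⁵⁾` (`scal_mem`). This scalar acts
without fixed points on `F4³`, so non-commuting elements of `E` survive into `G⁽⁶⁾`, and their
commutator is a non-trivial element of `G⁽⁷⁾`.
-/

/-- `SolvableGroupData G d n` says that `G` is a finite solvable group of derived
length exactly `d` and composition length (= Ω of its order) equal to `n`. -/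
def SolvableGroupData (G : Type) [Group G] (d n : ℕ) : Prop :=
  Finite G ∧ IsSolvable G ∧ derivedSeries G d = ⊥ ∧ derivedSeries G (d - 1) ≠ ⊥ ∧
    (Nat.card G).primeFactorsList.length = n

/-! ### Derived lengths of extensions -/

/-- Derived length is subadditive along extensions. -/
theorem derivedSeries_add_eq_bot {G H : Type*} [Group G] [Group H] (f : G →* H) (a b : ℕ)
    (hH : derivedSeries H a = ⊥) (hK : derivedSeries f.ker b = ⊥) :
    derivedSeries G (a + b) = ⊥ := by
  have h0 : derivedSeries G a ≤ f.ker := by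
    have h := map_derivedSeries_le_derivedSeries f a
    rw [hH, le_bot_iff, Subgroup.map_eq_bot_iff] at h
    exact h
  have h1 : ∀ n, derivedSeries G (a + n) ≤ (derivedSeries f.ker n).map f.ker.subtype := by
    intro n
    induction n with
    | zero =>
      rw [derivedSeries_zero, ← MonoidHom.range_eq_map, Subgroup.range_subtype]
      exact h0
    | succ n ih =>
      rw [← add_assoc, derivedSeries_succ, derivedSeries_succ, Subgroup.map_commutator]
      exact Subgroup.commutator_mono ih ih
  have h2 := h1 b
  rwa [hK, Subgroup.map_bot, le_bot_iff] at h2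

theorem derivedSeries_one_eq_bot_of_comm {G : Type*} [Group G] (h : ∀ a b : G, a * b = b * a) :
    derivedSeries G 1 = ⊥ := by
  rw [derivedSeries_succ, derivedSeries_zero, eq_bot_iff, Subgroup.commutator_le]
  intro x _ y _
  rw [Subgroup.mem_bot, commutatorElement_eq_one_iff_mul_comm]
  exact h x y

theorem derivedSeries_eq_bot_of_injective {G H : Type*} [Group G] [Group H] (f : G →* H)
    (hf : Function.Injective f) (n : ℕ) (hH : derivedSeries H n = ⊥) : derivedSeries G n = ⊥ := by
  have h := map_derivedSeries_le_derivedSeries f n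
  rwa [hH, le_bot_iff, Subgroup.map_eq_bot_iff_of_injective _ hf] at h

/-- The semidirect product version of `derivedSeries_add_eq_bot`. -/
theorem derivedSeries_semidirect_eq_bot {N H : Type*} [Group N] [Group H] (φ : H →* MulAut N)
    (a b : ℕ) (hH : derivedSeries H a = ⊥) (hN : derivedSeries N b = ⊥) :
    derivedSeries (N ⋊[φ] H) (a + b) = ⊥ := by
  refine derivedSeries_add_eq_bot SemidirectProduct.rightHom a b hH ?_
  rw [← SemidirectProduct.range_inl_eq_ker_rightHom]
  refine derivedSeries_eq_bot_of_injective
    (MonoidHom.ofInjective (SemidirectProduct.inl_injective (φ := φ))).symm.toMonoidHom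
    (MulEquiv.injective _) b hN

/-- The centre of a group of order `p ^ 3` is non-trivial, so its quotient has order dividing
`p ^ 2` and is abelian. -/
theorem derivedSeries_two_eq_bot_of_card {G : Type*} [Group G] (p : ℕ) [hp : Fact p.Prime]
    (h : Nat.card G = p ^ 3) : derivedSeries G 2 = ⊥ := by
  have : Finite G := Nat.finite_of_card_ne_zero (by rw [h]; exact (pow_pos hp.out.pos 3).ne')
  have : Nontrivial G := by
    rw [← Finite.one_lt_card_iff_nontrivial, h]
    exact one_lt_pow₀ hp.out.one_lt (by norm_num)
  have hZ := (IsPGroup.of_card h).center_nontrivial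
  refine derivedSeries_add_eq_bot (QuotientGroup.mk' (Subgroup.center G)) 1 1 ?_ ?_
  · apply derivedSeries_one_eq_bot_of_comm
    have hdvd : Nat.card (G ⧸ Subgroup.center G) ∣ p ^ 3 := h ▸ Subgroup.card_quotient_dvd_card _
    obtain ⟨k, hk, hc⟩ := (Nat.dvd_prime_pow hp.out).1 hdvd
    have hk3 : k ≠ 3 := by
      rintro rfl
      have h1 := Subgroup.card_mul_index (Subgroup.center G)
      have h2 : (Subgroup.center G).index = p ^ 3 := hc
      rw [h2, h] at h1
      have h3 : Nat.card (Subgroup.center G) = 1 :=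
        Nat.eq_of_mul_eq_mul_right (pow_pos hp.out.pos 3) (by rw [h1, one_mul])
      have h4 := Finite.one_lt_card_iff_nontrivial.2 hZ
      omega
    have hk2 : k = 0 ∨ k = 1 ∨ k = 2 := by omega
    rcases hk2 with rfl | rfl | rfl
    · have := (Nat.card_eq_one_iff_unique.1 (by simpa using hc)).1
      exact fun a b => Subsingleton.elim _ _
    · have := isCyclic_of_prime_card (p := p) (by simpa using hc)
      intro a b
      have := IsCyclic.isMulCommutative (α := G ⧸ Subgroup.center G)
      exact mul_comm' a b
    · have := IsPGroup.isMulCommutative_of_card_eq_prime_sq hc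
      intro a b
      exact mul_comm' a b
  · rw [QuotientGroup.ker_mk']
    exact derivedSeries_one_eq_bot_of_comm fun a b => mul_comm' a b

/-! ### The field with four elements -/

/-- The field with four elements; `w` is a primitive cube root of unity and `w2 = w²`. -/
inductive F4 | zero | one | w | w2
deriving DecidableEq

namespace F4

instance : Fintype F4 := ⟨{zero, one, w, w2}, by intro x; cases x <;> decide⟩

/-- Addition of `F4`. -/
def add : F4 → F4 → F4
  | zero, y => y
  | x, zero => x
  | one, one => zero | one, w => w2 | one, w2 => w
  | w, one => w2 | w, w => zero | w, w2 => one
  | w2, one => w | w2, w => one | w2, w2 => zero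

/-- Multiplication of `F4`. -/
def mul : F4 → F4 → F4
  | zero, _ => zero
  | _, zero => zero
  | one, y => y
  | x, one => x
  | w, w => w2 | w, w2 => one | w2, w => one | w2, w2 => w

/-- The Frobenius automorphism `x ↦ x²`, which is the involution of `F4` over `F2`. -/
def conj : F4 → F4
  | zero => zero | one => one | w => w2 | w2 => w

instance : Zero F4 := ⟨zero⟩
instance : One F4 := ⟨one⟩
instance : Add F4 := ⟨add⟩
instance : Mul F4 := ⟨mul⟩
instance : Neg F4 := ⟨id⟩

instance : CommRing F4 where
  nsmul := nsmulRec
  zsmul := zsmulRec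
  add_assoc := by decide +kernel
  zero_add := by decide +kernel
  add_zero := by decide +kernel
  add_comm := by decide +kernel
  neg_add_cancel := by decide +kernel
  mul_assoc := by decide +kernel
  one_mul := by decide +kernel
  mul_one := by decide +kernel
  mul_comm := by decide +kernel
  left_distrib := by decide +kernel
  right_distrib := by decide +kernel
  zero_mul := by decide +kernel
  mul_zero := by decide +kernel

instance : StarRing F4 where
  star := conj
  star_involutive := by unfold Function.Involutive; decide +kernel
  star_mul := by decide +kernel
  star_add := by decide +kernel

/-- The powers of the primitive cube root of unity. -/
def root (k : Fin 3) : F4 := ![one, w, w2] k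

end F4

open F4 Matrix

/-! ### The unitary group `GU₃(2)` -/

/-- The general unitary group `GU₃(2)`, of order 648. -/
abbrev U3 : Type := Matrix.unitaryGroup (Fin 3) F4

/-- The determinant `GU₃(2) → F4ˣ`. -/
noncomputable def detU : U3 →* F4ˣ :=
  (Matrix.detMonoidHom.comp (Submonoid.subtype (Matrix.unitaryGroup (Fin 3) F4))).toHomUnits

theorem mem_ker_detU {x : U3} : x ∈ detU.ker ↔ (x : Matrix (Fin 3) (Fin 3) F4).det = 1 := by
  rw [MonoidHom.mem_ker, Units.ext_iff]
  rfl

/-- `p` and `q` are orthonormal vectors of `F4³`. -/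
def RowPair (p q : F4 × F4 × F4) : Prop :=
  (p.1 * star p.1 + p.2.1 * star p.2.1 + p.2.2 * star p.2.2 = 1) ∧
  (q.1 * star q.1 + q.2.1 * star q.2.1 + q.2.2 * star q.2.2 = 1) ∧
  (p.1 * star q.1 + p.2.1 * star q.2.1 + p.2.2 * star q.2.2 = 0)

instance (p q : F4 × F4 × F4) : Decidable (RowPair p q) := by unfold RowPair; infer_instance

/-- The matrix with rows `p`, `q` and the conjugate of the cross product of `p` and `q`: the only
candidate for an element of `SU₃(2)` with first two rows `p` and `q`. -/
def ofRows (p q : F4 × F4 × F4) : Matrix (Fin 3) (Fin 3) F4 :=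
  !![p.1, p.2.1, p.2.2; q.1, q.2.1, q.2.2;
    star (p.2.1 * q.2.2 - p.2.2 * q.2.1), star (p.2.2 * q.1 - p.1 * q.2.2),
    star (p.1 * q.2.1 - p.2.1 * q.1)]

/-- A row of a `3 × 3` matrix as a triple. -/
def row3 (M : Matrix (Fin 3) (Fin 3) F4) (i : Fin 3) : F4 × F4 × F4 := (M i 0, M i 1, M i 2)

theorem card_rowPair :
    Fintype.card {x : (F4 × F4 × F4) × (F4 × F4 × F4) // RowPair x.1 x.2} = 216 := by
  decide +kernel

/-- The third row has norm one by the Lagrange identity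
`|p × q|² = ⟨p, p⟩⟨q, q⟩ - ⟨p, q⟩⟨q, p⟩`, and the determinant is the same norm. -/
theorem ofRows_mem (p q : F4 × F4 × F4) (h : RowPair p q) :
    ofRows p q * star (ofRows p q) = 1 ∧ (ofRows p q).det = 1 := by
  obtain ⟨p0, p1, p2⟩ := p
  obtain ⟨q0, q1, q2⟩ := q
  obtain ⟨h1, h2, h3⟩ := h
  have h4 := congrArg star h3
  simp only [star_add, star_mul, star_star, star_zero] at h1 h2 h3 h4
  constructor
  · ext i j
    fin_cases i <;> fin_cases j <;>
      simp [ofRows, Matrix.mul_apply, Fin.sum_univ_three, -mul_eq_zero]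
    · linear_combination h1
    · linear_combination h3
    · ring
    · linear_combination h4
    · linear_combination h2
    · ring
    · ring
    · ring
    · linear_combination (q0 * star q0 + q1 * star q1 + q2 * star q2) * h1 + h2
        - (q0 * star p0 + q1 * star p1 + q2 * star p2) * h3
  · simp [ofRows, Matrix.det_fin_three]
    linear_combination (q0 * star q0 + q1 * star q1 + q2 * star q2) * h1 + h2
        - (q0 * star p0 + q1 * star p1 + q2 * star p2) * h3

/-- For `x ∈ SU₃(2)` the adjoint is the adjugate, which expresses the third row through the first
two. -/
theorem rows_of_mem (x : U3) (hx : x ∈ detU.ker) :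
    RowPair (row3 x 0) (row3 x 1) ∧ ofRows (row3 x 0) (row3 x 1) = x := by
  rw [mem_ker_detU] at hx
  obtain ⟨M, hM⟩ := x
  simp only at hx ⊢
  have h1 : M * star M = 1 := Matrix.mem_unitaryGroup_iff.1 hM
  have h2 : star M = M.adjugate := by
    calc star M = (M.adjugate * M) * star M := by rw [Matrix.adjugate_mul, hx, one_smul, one_mul]
      _ = M.adjugate := by rw [mul_assoc, h1, mul_one]
  have e : ∀ i j, (M * star M) i j = (1 : Matrix (Fin 3) (Fin 3) F4) i j := fun i j => by rw [h1]
  constructor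
  · refine ⟨?_, ?_, ?_⟩
    · simpa [Matrix.mul_apply, Fin.sum_univ_three, row3] using e 0 0
    · simpa [Matrix.mul_apply, Fin.sum_univ_three, row3] using e 1 1
    · simpa [Matrix.mul_apply, Fin.sum_univ_three, row3] using e 0 1
  · have g : ∀ j, M 2 j = star (M.adjugate j 2) := fun j => by
      rw [← h2, Matrix.star_apply, star_star]
    rw [Matrix.adjugate_fin_three] at g
    have g0 := g 0
    have g1 := g 1
    have g2 := g 2
    ext i j
    fin_cases i <;> fin_cases j <;> simp [ofRows, row3]
    · rw [g0]; simp
    · rw [g1]; simp; ring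
    · rw [g2]; simp

theorem card_SU : Nat.card detU.ker = 216 := by
  rw [← card_rowPair, ← Nat.card_eq_fintype_card]
  refine Nat.card_congr
    { toFun := fun x => ⟨(row3 x.1 0, row3 x.1 1), (rows_of_mem x.1 x.2).1⟩
      invFun := fun y => ⟨⟨ofRows y.1.1 y.1.2,
        Matrix.mem_unitaryGroup_iff.2 (ofRows_mem _ _ y.2).1⟩,
        mem_ker_detU.2 (ofRows_mem _ _ y.2).2⟩
      left_inv := fun x => Subtype.ext (Subtype.ext (rows_of_mem x.1 x.2).2)
      right_inv := fun y => rfl }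

theorem detU_surjective : Function.Surjective detU := by
  intro u
  have h : ∀ x y : F4, x * y = 1 → (!![x, 0, 0; 0, 1, 0; 0, 0, 1] : Matrix (Fin 3) (Fin 3) F4) *
      star (!![x, 0, 0; 0, 1, 0; 0, 0, 1] : Matrix (Fin 3) (Fin 3) F4) = 1 := by
    decide +kernel
  refine ⟨⟨!![u, 0, 0; 0, 1, 0; 0, 0, 1], Matrix.mem_unitaryGroup_iff.2 (h u _ u.mul_inv)⟩, ?_⟩
  rw [Units.ext_iff]
  change (!![(u : F4), 0, 0; 0, 1, 0; 0, 0, 1] : Matrix (Fin 3) (Fin 3) F4).det = u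
  simp [Matrix.det_fin_three]

theorem card_U3 : Nat.card U3 = 648 := by
  rw [← Subgroup.card_mul_index detU.ker, card_SU, Subgroup.index_ker,
    MonoidHom.range_eq_top.2 detU_surjective, Subgroup.card_top, Nat.card_eq_fintype_card]
  have : Fintype.card F4ˣ = 3 := by decide +kernel
  rw [this]

/-! ### The normal subgroup `3^{1+2}` of `SU₃(2)` -/

/-- The Weyl matrices `w^a · Z^b · X^c`, where `X` is the cyclic shift of coordinates and `Z` the
diagonal matrix with entries `1, w, w²`. -/
def weyl (p : Fin 3 × Fin 3 × Fin 3) : Matrix (Fin 3) (Fin 3) F4 :=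
  Matrix.of fun i j => if i = j + p.2.2 then root (p.1 + p.2.1 * i) else 0

theorem root_add : ∀ a b, root (a + b) = root a * root b := by decide +kernel

theorem weyl_mul (p q : Fin 3 × Fin 3 × Fin 3) : weyl p * weyl q =
    weyl (p.1 + q.1 - q.2.1 * p.2.2, p.2.1 + q.2.1, p.2.2 + q.2.2) := by
  obtain ⟨a, b, c⟩ := p
  obtain ⟨a', b', c'⟩ := q
  have h1 : ∀ i k c : Fin 3, i = k + c ↔ k = i - c := by decide
  have h2 : ∀ i j c c' : Fin 3, i - c = j + c' ↔ i = j + (c + c') := by decide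
  have h3 : ∀ b b' i c : Fin 3, b * i + b' * (i - c) = (b + b') * i - b' * c := by decide
  have h4 : ∀ a a' x y : Fin 3, a + a' - y + x = (a + a') + (x - y) := by decide
  ext i j
  simp only [Matrix.mul_apply, weyl, Matrix.of_apply, h1 i, ite_mul, zero_mul]
  rw [Finset.sum_ite_eq' Finset.univ (i - c), if_pos (Finset.mem_univ _)]
  simp only [← h1, h2 i j]
  split_ifs
  · rw [h4, ← h3]
    simp only [root_add]
    ring
  · rw [mul_zero]

theorem weyl_mem : ∀ p, weyl p * star (weyl p) = 1 := by
  decide +kernel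

theorem weyl_injective : ∀ p q, weyl p = weyl q → p = q := by
  decide +kernel

theorem weyl_zero : weyl 0 = 1 := by decide +kernel

theorem weyl_trace : ∀ p, (weyl p).trace = 0 ∨ weyl p = root p.1 • 1 := by
  decide +kernel

theorem weyl_scalar : ∀ k, weyl (k, 0, 0) = root k • 1 := by
  decide +kernel

theorem det_weyl : ∀ p, (weyl p).det = 1 := by
  have h : ∀ p, weyl p 0 0 * weyl p 1 1 * weyl p 2 2 - weyl p 0 0 * weyl p 1 2 * weyl p 2 1
      - weyl p 0 1 * weyl p 1 0 * weyl p 2 2 + weyl p 0 1 * weyl p 1 2 * weyl p 2 0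
      + weyl p 0 2 * weyl p 1 0 * weyl p 2 1 - weyl p 0 2 * weyl p 1 1 * weyl p 2 0 = 1 := by
    decide +kernel
  intro p
  rw [Matrix.det_fin_three]
  exact h p

theorem exists_weyl_of_trace : ∀ p q, RowPair p q →
    ofRows p q 0 0 + ofRows p q 1 1 + ofRows p q 2 2 = 0 → ∃ n, ofRows p q = weyl n := by
  decide +kernel

/-- The elements of `SU₃(2)` of trace zero are the non-scalar Weyl matrices. Trace and scalars
being invariant under conjugation, this is what makes the Weyl matrices a normal subgroup. -/
theorem exists_weyl_of_mem (x : U3) (hx : x ∈ detU.ker)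
    (ht : (x : Matrix (Fin 3) (Fin 3) F4).trace = 0) : ∃ n, x.1 = weyl n := by
  obtain ⟨h1, h2⟩ := rows_of_mem x hx
  rw [← h2] at ht ⊢
  rw [Matrix.trace_fin_three] at ht
  exact exists_weyl_of_trace _ _ h1 ht

/-- The subgroup `3^{1+2}` of `SU₃(2)` formed by the Weyl matrices. -/
def heis : Subgroup detU.ker where
  carrier := {x | ∃ n, x.1.1 = weyl n}
  mul_mem' := by
    rintro x y ⟨p, hp⟩ ⟨q, hq⟩
    refine ⟨(p.1 + q.1 - q.2.1 * p.2.2, p.2.1 + q.2.1, p.2.2 + q.2.2), ?_⟩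
    rw [← weyl_mul, ← hp, ← hq]
    rfl
  one_mem' := ⟨0, weyl_zero.symm⟩
  inv_mem' := by
    rintro x ⟨p, hp⟩
    have h : ∀ p : Fin 3 × Fin 3 × Fin 3, ∃ q, star (weyl p) = weyl q := by decide +kernel
    obtain ⟨q, hq⟩ := h p
    refine ⟨q, ?_⟩
    rw [← hq, ← hp]; rfl

theorem card_heis : Nat.card heis = 27 := by
  have h : Nat.card (Fin 3 × Fin 3 × Fin 3) = 27 := by simp
  rw [← h]
  refine (Nat.card_congr (Equiv.ofBijective (fun p => ⟨⟨⟨weyl p,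
    Matrix.mem_unitaryGroup_iff.2 (weyl_mem p)⟩, mem_ker_detU.2 (det_weyl p)⟩, p, rfl⟩)
    ⟨?_, ?_⟩)).symm
  · intro p q hpq
    apply weyl_injective
    exact congrArg (fun x : heis => x.1.1.1) hpq
  · rintro ⟨x, p, hp⟩
    exact ⟨p, Subtype.ext (Subtype.ext (Subtype.ext hp.symm))⟩

instance : heis.Normal := by
  constructor
  rintro x ⟨p, hp⟩ g
  have hg : star g.1.1 * g.1.1 = 1 := Matrix.mem_unitaryGroup_iff'.1 g.1.2
  have hg' : g.1.1 * star g.1.1 = 1 := Matrix.mem_unitaryGroup_iff.1 g.1.2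
  have hc : (g * x * g⁻¹).1.1 = g.1.1 * x.1.1 * star g.1.1 := rfl
  rcases weyl_trace p with h | h
  · apply exists_weyl_of_mem _ (g * x * g⁻¹).2
    rw [hc, Matrix.trace_mul_cycle, hg, one_mul, hp, h]
  · refine ⟨p, ?_⟩
    rw [hc, hp, h, Matrix.mul_smul, Matrix.smul_mul, mul_one, hg']

theorem derivedSeries_U3 : derivedSeries U3 5 = ⊥ := by
  refine derivedSeries_add_eq_bot detU 1 4 (derivedSeries_one_eq_bot_of_comm mul_comm) ?_
  refine derivedSeries_add_eq_bot (QuotientGroup.mk' heis) 2 2 ?_ ?_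
  · have : Fact (Nat.Prime 2) := ⟨Nat.prime_two⟩
    apply derivedSeries_two_eq_bot_of_card 2
    have h := Subgroup.card_mul_index heis
    rw [card_heis, card_SU] at h
    change heis.index = _
    omega
  · rw [QuotientGroup.ker_mk']
    have : Fact (Nat.Prime 3) := ⟨Nat.prime_three⟩
    exact derivedSeries_two_eq_bot_of_card 3 card_heis

/-! ### The extraspecial group `2^{1+6}` -/

/-- The extraspecial group `2^{1+6}`, realised as the unipotent radical of the stabiliser of an
isotropic line in `GU₅(2)`: pairs of a vector `v ∈ F4³` and a scalar `a` with `a + ā = ⟨v, v⟩`. -/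
@[ext]
structure E where
  /-- The image in the central quotient `F4³`. -/
  v : Fin 3 → F4
  /-- The scalar part. -/
  a : F4
  /-- The Hermitian norm of `v` is the trace of `a`. -/
  h : a + star a = v ⬝ᵥ star v

theorem star_dot (v w : Fin 3 → F4) : star (v ⬝ᵥ star w) = w ⬝ᵥ star v := by
  rw [← Matrix.star_dotProduct_star, star_star, dotProduct_comm]

namespace E

instance : Mul E := ⟨fun x y => ⟨x.v + y.v, x.a + y.a + x.v ⬝ᵥ star y.v, by
  have hx := x.h
  have hy := y.h
  rw [star_add, star_add, star_dot, star_add, add_dotProduct, dotProduct_add, dotProduct_add]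
  linear_combination hx + hy⟩⟩

instance : One E := ⟨⟨0, 0, by simp⟩⟩

instance : Inv E := ⟨fun x => ⟨-x.v, star x.a, by
  rw [star_neg, neg_dotProduct_neg, star_star, ← x.h, add_comm]⟩⟩

@[simp] theorem mul_v (x y : E) : (x * y).v = x.v + y.v := rfl
@[simp] theorem mul_a (x y : E) : (x * y).a = x.a + y.a + x.v ⬝ᵥ star y.v := rfl
@[simp] theorem one_v : (1 : E).v = 0 := rfl
@[simp] theorem one_a : (1 : E).a = 0 := rfl
@[simp] theorem inv_v (x : E) : (x⁻¹).v = -x.v := rfl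
@[simp] theorem inv_a (x : E) : (x⁻¹).a = star x.a := rfl

instance : Group E := Group.ofLeftAxioms
  (by
    intro x y z
    apply E.ext
    · simp [add_assoc]
    · simp [add_dotProduct, dotProduct_add]; ring)
  (by intro x; apply E.ext <;> simp)
  (by
    intro x
    apply E.ext
    · simp
    · simp [← x.h]; ring)

/-- The projection of `2^{1+6}` onto its central quotient. -/
def proj : E →* Multiplicative (Fin 3 → F4) where
  toFun x := Multiplicative.ofAdd x.v
  map_one' := rfl
  map_mul' _ _ := rfl

theorem derivedSeries_two : derivedSeries E 2 = ⊥ := by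
  refine derivedSeries_add_eq_bot proj 1 1 (derivedSeries_one_eq_bot_of_comm mul_comm) ?_
  apply derivedSeries_one_eq_bot_of_comm
  rintro ⟨x, hx⟩ ⟨y, hy⟩
  have hx' : x.v = 0 := hx
  have hy' : y.v = 0 := hy
  apply Subtype.ext
  apply E.ext
  · simp [hx', hy']
  · simp [hx', hy', add_comm]

theorem card_eq : Nat.card E = 128 := by
  have h : Fintype.card {x : F4 × F4 × F4 × F4 // x.1 + star x.1 =
      x.2.1 * star x.2.1 + x.2.2.1 * star x.2.2.1 + x.2.2.2 * star x.2.2.2} = 128 := by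
    decide +kernel
  rw [← h, ← Nat.card_eq_fintype_card]
  refine Nat.card_congr
    { toFun := fun x => ⟨(x.a, x.v 0, x.v 1, x.v 2), by
        simpa [dotProduct, Fin.sum_univ_three] using x.h⟩
      invFun := fun y => ⟨![y.1.2.1, y.1.2.2.1, y.1.2.2.2], y.1.1, by
        simpa [dotProduct, Fin.sum_univ_three] using y.2⟩
      left_inv := fun x => by
        apply E.ext
        · funext i
          fin_cases i <;> rfl
        · rfl
      right_inv := fun y => rfl }

theorem mulVec_dot (M : U3) (v w : Fin 3 → F4) :
    (M.1 *ᵥ v) ⬝ᵥ star (M.1 *ᵥ w) = v ⬝ᵥ star w := by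
  have hM : M.1ᴴ * M.1 = 1 := Matrix.mem_unitaryGroup_iff'.1 M.2
  rw [star_mulVec, dotProduct_comm, dotProduct_mulVec, vecMul_vecMul, hM, vecMul_one,
    dotProduct_comm]

/-- The action of `GU₃(2)` on `2^{1+6}`. -/
def act (M : U3) (x : E) : E := ⟨M.1 *ᵥ x.v, x.a, by rw [mulVec_dot]; exact x.h⟩

theorem act_one (x : E) : act 1 x = x := E.ext (one_mulVec x.v) rfl

theorem act_mul (M N : U3) (x : E) : act (M * N) x = act M (act N x) :=
  E.ext (mulVec_mulVec x.v M.1 N.1).symm rfl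

theorem act_map_mul (M : U3) (x y : E) : act M (x * y) = act M x * act M y :=
  E.ext (mulVec_add M.1 x.v y.v) (congrArg (x.a + y.a + ·) (mulVec_dot M x.v y.v).symm)

theorem act_map_one (M : U3) : act M 1 = 1 := E.ext (mulVec_zero M.1) rfl

instance : MulDistribMulAction U3 E where
  smul := act
  one_smul := act_one
  mul_smul := act_mul
  smul_mul := act_map_mul
  smul_one := act_map_one

theorem star_dot_star (v w : Fin 3 → F4) : star v ⬝ᵥ star (star w) = star (v ⬝ᵥ star w) := by
  rw [star_dot, star_star, dotProduct_comm]

/-- The Frobenius automorphism of `2^{1+6}`. -/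
def frob : E ≃* E where
  toFun x := ⟨star x.v, star x.a, by rw [star_dot_star, ← x.h, star_add]⟩
  invFun x := ⟨star x.v, star x.a, by rw [star_dot_star, ← x.h, star_add]⟩
  left_inv x := E.ext (star_star _) (star_star _)
  right_inv x := E.ext (star_star _) (star_star _)
  map_mul' x y := E.ext (star_add _ _) (by
    simp only [mul_a]
    rw [star_add, star_add, star_dot_star])

end E

/-! ### The group `2^{1+6} ⋊ ΓU₃(2)` -/

theorem map_star_mem (M : U3) : M.1.map star ∈ Matrix.unitaryGroup (Fin 3) F4 := by
  rw [Matrix.mem_unitaryGroup_iff]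
  have h : M.1 * star M.1 = 1 := Matrix.mem_unitaryGroup_iff.1 M.2
  have h2 := congrArg (fun A : Matrix (Fin 3) (Fin 3) F4 => A.map (starRingEnd F4)) h
  simp only [Matrix.map_mul, Matrix.map_one _ (map_zero _) (map_one _)] at h2
  exact h2

/-- The Frobenius automorphism of `GU₃(2)`. -/
def frobU : U3 ≃* U3 where
  toFun M := ⟨M.1.map star, map_star_mem M⟩
  invFun M := ⟨M.1.map star, map_star_mem M⟩
  left_inv M := Subtype.ext (by ext i j; exact star_star _)
  right_inv M := Subtype.ext (by ext i j; exact star_star _)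
  map_mul' M N := Subtype.ext (Matrix.map_mul (f := starRingEnd F4))

/-- The semidirect product `2^{1+6} ⋊ GU₃(2)`. -/
abbrev P : Type := E ⋊[MulDistribMulAction.toMulAut U3 E] U3

/-- The Frobenius automorphism of `2^{1+6} ⋊ GU₃(2)`. -/
def frobP : MulAut P :=
  SemidirectProduct.congr E.frob frobU (by
    intro M
    ext x : 1
    change E.frob (E.act M x) = E.act (frobU M) (E.frob x)
    refine E.ext ?_ rfl
    change star (M.1 *ᵥ x.v) = M.1.map star *ᵥ star x.v
    funext i
    simp [mulVec, dotProduct, star_sum])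

theorem frobP_inr (M : U3) :
    frobP (SemidirectProduct.inr M) = SemidirectProduct.inr (frobU M) := by
  apply SemidirectProduct.ext
  · exact map_one E.frob
  · rfl

/-- The group `2^{1+6} ⋊ GU₃(2)` extended by its Frobenius automorphism. -/
abbrev BigG : Type := P ⋊[(Subgroup.zpowers frobP).subtype] (Subgroup.zpowers frobP)

/-! ### Elements deep in the derived series -/

section Witnesses

open SemidirectProduct

/-- The part of the `k`-th derived subgroup lying in `2^{1+6} ⋊ GU₃(2)`. -/
def derP (k : ℕ) : Subgroup P := (derivedSeries BigG k).comap inl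

/-- The part of the `k`-th derived subgroup lying in `GU₃(2)`. -/
def derU (k : ℕ) : Subgroup U3 := (derP k).comap inr

theorem commutator_mem_derP {k : ℕ} {x y : P} (hx : x ∈ derP k) (hy : y ∈ derP k) :
    x * y * x⁻¹ * y⁻¹ ∈ derP (k + 1) := by
  rw [derP, Subgroup.mem_comap] at *
  rw [derivedSeries_succ]
  simpa [commutatorElement_def] using Subgroup.commutator_mem_commutator hx hy

theorem commutator_mem_derU {k : ℕ} {x y : U3} (hx : x ∈ derU k) (hy : y ∈ derU k) :
    x * y * x⁻¹ * y⁻¹ ∈ derU (k + 1) := by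
  rw [derU, Subgroup.mem_comap] at *
  simpa using commutator_mem_derP hx hy

theorem derU_conj {k : ℕ} (g : U3) {x : U3} (hx : x ∈ derU k) : g * x * g⁻¹ ∈ derU k := by
  have h : (derU k).Normal := ((derivedSeries_normal BigG k).comap inl).comap inr
  exact h.conj_mem x hx g

theorem derU_succ_le (k : ℕ) : derU (k + 1) ≤ derU k := fun _ hx =>
  derivedSeries_antitone BigG (Nat.le_succ k) hx

theorem mem_derU_zero (x : U3) : x ∈ derU 0 := Subgroup.mem_top (inl (inr x) : BigG)

theorem mem_derP_zero (x : P) : x ∈ derP 0 := Subgroup.mem_top (inl x : BigG)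

/-- The quadratic chirp `diag(1, w, w)`, of order 3 and determinant `w²`. -/
def chirp : U3 := ⟨!![1, 0, 0; 0, w, 0; 0, 0, w],
  Matrix.mem_unitaryGroup_iff.2 (by decide +kernel)⟩

/-- The Fourier matrix `(w^{ij})`, of order 4; it is unitary as `3 = 1` in `F4`. -/
def dft : U3 := ⟨!![1, 1, 1; 1, w, w2; 1, w2, w],
  Matrix.mem_unitaryGroup_iff.2 (by decide +kernel)⟩

/-- The cyclic shift of coordinates. -/
def shift : U3 := ⟨!![0, 0, 1; 1, 0, 0; 0, 1, 0],
  Matrix.mem_unitaryGroup_iff.2 (by decide +kernel)⟩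

/-- The diagonal matrix `diag(1, w, w²)`. -/
def clock : U3 := ⟨!![1, 0, 0; 0, w, 0; 0, 0, w2],
  Matrix.mem_unitaryGroup_iff.2 (by decide +kernel)⟩

/-- The scalar matrix `w`. -/
def scal : U3 := ⟨!![w, 0, 0; 0, w, 0; 0, 0, w],
  Matrix.mem_unitaryGroup_iff.2 (by decide +kernel)⟩

theorem chirp_eq : frobU chirp * chirp⁻¹ = chirp := Subtype.ext (by decide +kernel)

theorem dft_eq : chirp * (chirp * dft * chirp⁻¹) * chirp⁻¹ *
    (chirp * dft * chirp⁻¹)⁻¹ = dft := Subtype.ext (by decide +kernel)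

/-- The square of the Fourier matrix is the central involution of the quaternion group generated
by the Fourier matrix and its conjugate under the chirp. -/
theorem dft_sq : dft * (chirp * dft * chirp⁻¹) * dft⁻¹ *
    (chirp * dft * chirp⁻¹)⁻¹ = dft * dft := Subtype.ext (by decide +kernel)

theorem shift_eq : (shift * (dft * dft) * shift⁻¹ * (dft * dft)⁻¹)⁻¹ = shift :=
  Subtype.ext (by decide +kernel)

theorem clock_eq : (clock * (dft * dft) * clock⁻¹ * (dft * dft)⁻¹)⁻¹ = clock :=
  Subtype.ext (by decide +kernel)

theorem scal_eq : (shift * clock * shift⁻¹ * clock⁻¹)⁻¹ = scal := Subtype.ext (by decide +kernel)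

/-- The chirp is a commutator with the Frobenius automorphism, which inverts it. -/
theorem chirp_mem : chirp ∈ derU 1 := by
  let f : BigG := inr ⟨frobP, Subgroup.mem_zpowers frobP⟩
  let c : BigG := inl (inr chirp)
  have h : f * c * f⁻¹ * c⁻¹ ∈ derivedSeries BigG 1 := by
    rw [derivedSeries_succ]
    exact Subgroup.commutator_mem_commutator (Subgroup.mem_top (G := BigG) _)
      (Subgroup.mem_top (G := BigG) _)
  have h2 : f * c * f⁻¹ = inl (inr (frobU chirp)) := by
    rw [← frobP_inr, ← map_inv]
    exact (inl_aut (φ := (Subgroup.zpowers frobP).subtype)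
      ⟨frobP, Subgroup.mem_zpowers frobP⟩ (inr chirp)).symm
  rw [h2, ← map_inv, ← map_mul, ← map_inv, ← map_mul, chirp_eq] at h
  exact h

theorem dft_step {k : ℕ} (hc : chirp ∈ derU k) (hf : dft ∈ derU k) :
    dft ∈ derU (k + 1) := by
  rw [← dft_eq]
  exact commutator_mem_derU hc (derU_conj _ hf)

theorem shift_clock_step {k : ℕ} (ht : dft * dft ∈ derU k)
    (h : shift ∈ derU k ∧ clock ∈ derU k) : shift ∈ derU (k + 1) ∧ clock ∈ derU (k + 1) := by
  constructor
  · rw [← shift_eq]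
    exact inv_mem (commutator_mem_derU h.1 ht)
  · rw [← clock_eq]
    exact inv_mem (commutator_mem_derU h.2 ht)

theorem scal_mem : scal ∈ derU 5 := by
  have f1 : dft ∈ derU 1 := dft_step (mem_derU_zero _) (mem_derU_zero _)
  have f2 : dft ∈ derU 2 := dft_step chirp_mem f1
  have t3 : dft * dft ∈ derU 3 := by
    rw [← dft_sq]
    exact commutator_mem_derU f2 (derU_conj _ f2)
  have s1 := shift_clock_step (mem_derU_zero _) ⟨mem_derU_zero shift, mem_derU_zero clock⟩
  have s2 := shift_clock_step (mul_mem f1 f1) s1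
  have s3 := shift_clock_step (mul_mem f2 f2) s2
  have s4 := shift_clock_step t3 s3
  rw [← scal_eq]
  exact inv_mem (commutator_mem_derU s4.1 s4.2)

/-- The elements `(x e₁, w·N(x))` of `2^{1+6}`: up to the scaling of `x`, the commutators with the
scalar `w` of elements above the first coordinate axis. -/
def lineElt (x : F4) : E := ⟨![x, 0, 0], w * (x * star x), by
  revert x; decide +kernel⟩

theorem lineElt_eq (x : F4) :
    lineElt (w * x) * (E.act scal (lineElt (w * x)))⁻¹ = lineElt x := by
  revert x
  have h : ∀ x : F4, (lineElt (w * x)).v + -(scal.1 *ᵥ (lineElt (w * x)).v) = (lineElt x).v ∧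
    (lineElt (w * x)).a + star (lineElt (w * x)).a +
      (lineElt (w * x)).v ⬝ᵥ star (-(scal.1 *ᵥ (lineElt (w * x)).v)) = (lineElt x).a := by
    decide +kernel
  exact fun x => E.ext (h x).1 (h x).2

theorem lineElt_step {k : ℕ} (hs : scal ∈ derU k) (h : ∀ x, inl (lineElt x) ∈ derP k) (x : F4) :
    inl (lineElt x) ∈ derP (k + 1) := by
  have h1 := commutator_mem_derP (h (w * x)) hs
  have h2 : (inl (lineElt (w * x)) : P) * inr scal * (inl (lineElt (w * x)))⁻¹ * (inr scal)⁻¹ =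
      inl (lineElt (w * x)) *
        (inr scal * inl (lineElt (w * x)) * (inr scal)⁻¹)⁻¹ := by group
  rw [h2, ← map_inv inr, ← inl_aut, ← map_inv, ← map_mul] at h1
  rw [← lineElt_eq]
  exact h1

theorem lineElt_mem (x : F4) : inl (lineElt x) ∈ derP 6 := by
  have s5 := scal_mem
  have s4 := derU_succ_le _ s5
  have s3 := derU_succ_le _ s4
  have s2 := derU_succ_le _ s3
  have s1 := derU_succ_le _ s2
  have h1 := lineElt_step (mem_derU_zero _) (fun x => mem_derP_zero (inl (lineElt x)))
  exact lineElt_step s5 (lineElt_step s4 (lineElt_step s3 (lineElt_step s2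
    (lineElt_step s1 h1)))) x

theorem derivedSeries_seven_ne_bot : derivedSeries BigG 7 ≠ ⊥ := by
  intro h
  have h1 := commutator_mem_derP (lineElt_mem one) (lineElt_mem w)
  rw [derP, h, Subgroup.mem_comap, Subgroup.mem_bot] at h1
  rw [← map_one inl, inl_inj, ← map_inv, ← map_inv, ← map_mul, ← map_mul, ← map_mul,
    ← map_one inl, inl_inj] at h1
  have h2 := congrArg E.a h1
  revert h2
  decide +kernel

end Witnesses

theorem derivedSeries_eight : derivedSeries BigG 8 = ⊥ :=
  derivedSeries_semidirect_eq_bot _ 1 7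
    (derivedSeries_one_eq_bot_of_comm fun a b => mul_comm' a b)
    (derivedSeries_semidirect_eq_bot _ 5 2 derivedSeries_U3 E.derivedSeries_two)

theorem card_zpowers_frobP : Nat.card (Subgroup.zpowers frobP) = 2 := by
  rw [Nat.card_zpowers]
  have : Fact (Nat.Prime 2) := ⟨Nat.prime_two⟩
  apply orderOf_eq_prime
  · ext x : 1
    rw [pow_two]
    exact SemidirectProduct.ext (E.frob.left_inv x.left) (frobU.left_inv x.right)
  · intro h
    have h1 : frobP (SemidirectProduct.inr chirp) = SemidirectProduct.inr chirp := by rw [h]; rfl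
    rw [frobP_inr, SemidirectProduct.inr_inj] at h1
    have h2 := congrArg (fun M : U3 => M.1 1 1) h1
    revert h2
    decide +kernel

theorem card_BigG : Nat.card BigG = 165888 := by
  rw [SemidirectProduct.card, SemidirectProduct.card, E.card_eq, card_U3, card_zpowers_frobP]

/-- There exists a finite solvable group of derived length exactly 8 whose
composition length equals 15 (e.g. `GL₂(3) ⋉ 3^{2+1} ⋉ 2^{6+1}` of order `2^11·3^4`). -/
theorem exists_group_derivedLength_8_compLength_15 :
    ∃ (G : Type) (inst : Group G), @SolvableGroupData G inst 8 15 := by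
  refine ⟨BigG, inferInstance, ?_, ⟨8, derivedSeries_eight⟩, derivedSeries_eight,
    derivedSeries_seven_ne_bot, ?_⟩
  · exact Nat.finite_of_card_ne_zero (by rw [card_BigG]; norm_num)
  · have h : (List.replicate 11 2 ++ List.replicate 4 3).Perm
        (Nat.primeFactorsList 165888) := by
      refine Nat.primeFactorsList_unique (by norm_num [List.replicate]) fun p hp => ?_
      rcases List.mem_append.1 hp with hp | hp
      · rw [List.eq_of_mem_replicate hp]; exact Nat.prime_two
      · rw [List.eq_of_mem_replicate hp]; exact Nat.prime_three
    rw [card_BigG, ← h.length_eq]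
    simp
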